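/- Fix a positive integer K and positive reals ν_S, μ_D, μ_R, ν_R, E_R, E_S, β_EI, β_SR. For positive reals N_R, N_T define f(N_R, N_T) = min{ 1/(ν_S + (K/N_R)·μ_R·ν_S + (K/N_R)·ν_R·(E_R β_EI)/(E_S β_SR)), 1/(μ_D + (K/N_T)·ν_R·(1 + μ_D)) }. Then f(N_R, N_T) ≤ min{1/ν_S, 1/μ_D} for all N_R, N_T > 0, and f(N_R, N_T) → min{1/ν_S, 1/μ_D} as min{N_R, N_T} → ∞ (i.e., for every ε > 0 there exists N₀ such that |f(N_R,N_T) − min{1/ν_S, 1/μ_D}| < ε whenever N_R ≥ N₀ and N_T ≥ N₀). -/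

import Mathlib

/-- The "ceiling effect" of equation (3-7): with `K` and the hardware
impairment/power/fading parameters fixed and positive, the effective SINR
`f(N_R,N_T) = min{ 1/(ν_S + (K/N_R)μ_Rν_S + (K/N_R)ν_R(E_Rβ_EI)/(E_Sβ_SR)),
1/(μ_D + (K/N_T)ν_R(1+μ_D)) }` is bounded above by `min{1/ν_S, 1/μ_D}` for all
`N_R, N_T > 0`, and converges to `min{1/ν_S, 1/μ_D}` as `min{N_R, N_T} → ∞`. -/
theorem stmt_15 (K : ℕ) (hK : 0 < K)
    (νS μD μR νR ER ES βEI βSR : ℝ)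
    (hνS : 0 < νS) (hμD : 0 < μD) (hμR : 0 < μR) (hνR : 0 < νR)
    (hER : 0 < ER) (hES : 0 < ES) (hβEI : 0 < βEI) (hβSR : 0 < βSR)
    (f : ℝ → ℝ → ℝ)
    (hf : ∀ NR NT : ℝ, f NR NT =
      min (1 / (νS + ((K : ℝ) / NR) * μR * νS + ((K : ℝ) / NR) * νR * (ER * βEI) / (ES * βSR)))
          (1 / (μD + ((K : ℝ) / NT) * νR * (1 + μD)))) :
    (∀ NR NT : ℝ, 0 < NR → 0 < NT → f NR NT ≤ min (1 / νS) (1 / μD)) ∧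
    (∀ ε : ℝ, 0 < ε → ∃ N₀ : ℝ, ∀ NR NT : ℝ, N₀ ≤ NR → N₀ ≤ NT →
      |f NR NT - min (1 / νS) (1 / μD)| < ε) := by
  have hK' : (0 : ℝ) < K := by exact_mod_cast hK
  refine ⟨?_, ?_⟩
  · intro NR NT hR hT
    rw [hf]
    apply min_le_min
    · apply one_div_le_one_div_of_le hνS
      have h1 : 0 < ((K : ℝ) / NR) * μR * νS := by positivity
      have h2 : 0 < ((K : ℝ) / NR) * νR * (ER * βEI) / (ES * βSR) := by positivity
      linarith
    · apply one_div_le_one_div_of_le hμD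
      have h1 : 0 < ((K : ℝ) / NT) * νR * (1 + μD) := by positivity
      linarith
  · intro ε hε
    have hk : Filter.Tendsto (fun N : ℝ => (K : ℝ) / N) Filter.atTop (nhds 0) :=
      tendsto_const_nhds.div_atTop Filter.tendsto_id
    have h1 : Filter.Tendsto (fun N : ℝ => 1 / (νS + ((K : ℝ) / N) * μR * νS
        + ((K : ℝ) / N) * νR * (ER * βEI) / (ES * βSR))) Filter.atTop (nhds (1 / νS)) := by
      have h := ((hk.mul_const μR).mul_const νS).const_add νS
      have h' := h.add (((hk.mul_const νR).mul_const (ER * βEI)).div_const (ES * βSR))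
      simp only [zero_mul, zero_div, add_zero] at h'
      exact tendsto_const_nhds.div h' hνS.ne'
    have h2 : Filter.Tendsto (fun N : ℝ => 1 / (μD + ((K : ℝ) / N) * νR * (1 + μD)))
        Filter.atTop (nhds (1 / μD)) := by
      have h' := ((hk.mul_const νR).mul_const (1 + μD)).const_add μD
      simp only [zero_mul, add_zero] at h'
      exact tendsto_const_nhds.div h' hμD.ne'
    obtain ⟨A, hA⟩ := Metric.tendsto_atTop.1 h1 ε hε
    obtain ⟨B, hB⟩ := Metric.tendsto_atTop.1 h2 ε hε
    refine ⟨max A B, fun NR NT hR hT => ?_⟩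
    rw [hf]
    refine lt_of_le_of_lt (abs_min_sub_min_le_max _ _ _ _) (max_lt ?_ ?_)
    · exact hA NR ((le_max_left _ _).trans hR)
    · exact hB NT ((le_max_right _ _).trans hT)
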